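/- Semantics preservation of the CG-to-FG translation at boolean type: Suppose · ⊢ e_s : CG ℓ1 ℓ2 (bool) ⇝ e_t for the closed CG expression e_s. Then e_s, executed under CG's forcing semantics from the empty heap, terminates producing boolean value v if and only if the FG application e_t (), evaluated under FG's big-step semantics from the empty heap, terminates; and in that case the FG result is inl(v). -/

import Mathlib

/-!
The translation never looks at types, so it is a function `Exp.transl` on raw expressions, and it
commutes with shifting and substitution (`Exp.transl_subst`). The two operational semantics then
match exactly, heaps included, under `List.map Exp.transl`.

* From CG to FG no typing is needed: pure evaluation of `e` to `v` becomes FG evaluation of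
  `e.transl` to `v.transl` that leaves the heap unchanged (`CGPure.simulation`), and forcing `e`
  becomes applying the thunk `e.transl` to `()`, with result `inl v.transl`
  (`CGForce.simulation`).
* From FG to CG, one inducts on the FG derivation (`CGPure.reflection`, `CGForce.reflection`).
  Here typing is needed, because labeled values and left injections have the same image. Canonical
  forms tell them apart, and also rule out the `inr` branch in the translation of `bind`.

Only the shape of types matters for this, so security labels are erased: subtyping becomes
equality, and the simply typed system `HasTy`, extended with store typings for run-time
locations, satisfies type preservation for both pure evaluation and forcing
(`CGPure.preservation`, `CGForce.preservation`). At type `bool` the final value is `tt` or `ff`,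
which `Exp.transl` fixes, so the FG result is literally `inl v`.
-/

/-! ## Shared expression syntax for the FG and CG calculi (de Bruijn indices) -/

inductive Exp : Type where
  | var (n : ℕ)
  | lam (e : Exp)
  | app (e1 e2 : Exp)
  | pair (e1 e2 : Exp)
  | fst (e : Exp)
  | snd (e : Exp)
  | inl (e : Exp)
  | inr (e : Exp)
  | case (e e1 e2 : Exp)      -- the two branches each bind one variable
  | tt
  | ff
  | unit
  | loc (n : ℕ)
  | new (e : Exp)
  | deref (e : Exp)
  | assign (e1 e2 : Exp)
  | label (e : Exp)
  | unlabel (e : Exp)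
  | toLabeled (e : Exp)
  | ret (e : Exp)
  | bind (e1 e2 : Exp)        -- e2 binds one variable
deriving DecidableEq

namespace Exp

/-- Shift free de Bruijn indices `≥ c` up by one. -/
def shift (c : ℕ) : Exp → Exp
  | var n => if n < c then var n else var (n + 1)
  | lam e => lam (e.shift (c + 1))
  | app e1 e2 => app (e1.shift c) (e2.shift c)
  | pair e1 e2 => pair (e1.shift c) (e2.shift c)
  | fst e => fst (e.shift c)
  | snd e => snd (e.shift c)
  | inl e => inl (e.shift c)
  | inr e => inr (e.shift c)
  | case e e1 e2 => case (e.shift c) (e1.shift (c + 1)) (e2.shift (c + 1))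
  | tt => tt
  | ff => ff
  | unit => unit
  | loc n => loc n
  | new e => new (e.shift c)
  | deref e => deref (e.shift c)
  | assign e1 e2 => assign (e1.shift c) (e2.shift c)
  | label e => label (e.shift c)
  | unlabel e => unlabel (e.shift c)
  | toLabeled e => toLabeled (e.shift c)
  | ret e => ret (e.shift c)
  | bind e1 e2 => bind (e1.shift c) (e2.shift (c + 1))

/-- Substitution `e[v/k]` of `v` for de Bruijn index `k` in `e`. -/
def subst : Exp → Exp → ℕ → Exp
  | var n, v, k => if n = k then v else if k < n then var (n - 1) else var n
  | lam e, v, k => lam (e.subst (v.shift 0) (k + 1))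
  | app e1 e2, v, k => app (e1.subst v k) (e2.subst v k)
  | pair e1 e2, v, k => pair (e1.subst v k) (e2.subst v k)
  | fst e, v, k => fst (e.subst v k)
  | snd e, v, k => snd (e.subst v k)
  | inl e, v, k => inl (e.subst v k)
  | inr e, v, k => inr (e.subst v k)
  | case e e1 e2, v, k =>
      case (e.subst v k) (e1.subst (v.shift 0) (k + 1)) (e2.subst (v.shift 0) (k + 1))
  | tt, _, _ => tt
  | ff, _, _ => ff
  | unit, _, _ => unit
  | loc n, _, _ => loc n
  | new e, v, k => new (e.subst v k)
  | deref e, v, k => deref (e.subst v k)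
  | assign e1 e2, v, k => assign (e1.subst v k) (e2.subst v k)
  | label e, v, k => label (e.subst v k)
  | unlabel e, v, k => unlabel (e.subst v k)
  | toLabeled e, v, k => toLabeled (e.subst v k)
  | ret e, v, k => ret (e.subst v k)
  | bind e1 e2, v, k => bind (e1.subst v k) (e2.subst (v.shift 0) (k + 1))

end Exp

/-- Heaps: locations are list indices; allocation appends. -/
abbrev Heap := List Exp

/-! ## Values -/

/-- Values of the FG language. -/
inductive FGVal : Exp → Prop where
  | lam : FGVal (.lam e)
  | pair : FGVal v1 → FGVal v2 → FGVal (.pair v1 v2)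
  | inl : FGVal v → FGVal (.inl v)
  | inr : FGVal v → FGVal (.inr v)
  | tt : FGVal .tt
  | ff : FGVal .ff
  | unit : FGVal .unit
  | loc : FGVal (.loc n)

/-- Values of the CG language (monadic expressions are suspended computations,
hence values; labeled values are values). -/
inductive CGVal : Exp → Prop where
  | lam : CGVal (.lam e)
  | pair : CGVal v1 → CGVal v2 → CGVal (.pair v1 v2)
  | inl : CGVal v → CGVal (.inl v)
  | inr : CGVal v → CGVal (.inr v)
  | tt : CGVal .tt
  | ff : CGVal .ff
  | unit : CGVal .unit
  | loc : CGVal (.loc n)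
  | label : CGVal v → CGVal (.label v)
  | ret : CGVal (.ret e)
  | bind : CGVal (.bind e1 e2)
  | unlabel : CGVal (.unlabel e)
  | toLabeled : CGVal (.toLabeled e)
  | new : CGVal (.new e)
  | deref : CGVal (.deref e)
  | assign : CGVal (.assign e1 e2)

/-! ## FG: deterministic big-step call-by-value evaluation over heaps -/

inductive FGEval : Heap → Exp → Heap → Exp → Prop where
  | lam : FGEval h (.lam e) h (.lam e)
  | tt : FGEval h .tt h .tt
  | ff : FGEval h .ff h .ff
  | unit : FGEval h .unit h .unit
  | loc : FGEval h (.loc n) h (.loc n)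
  | app : FGEval h e1 h1 (.lam e) → FGEval h1 e2 h2 v2 →
      FGEval h2 (e.subst v2 0) h3 v → FGEval h (.app e1 e2) h3 v
  | pair : FGEval h e1 h1 v1 → FGEval h1 e2 h2 v2 →
      FGEval h (.pair e1 e2) h2 (.pair v1 v2)
  | fst : FGEval h e h1 (.pair v1 v2) → FGEval h (.fst e) h1 v1
  | snd : FGEval h e h1 (.pair v1 v2) → FGEval h (.snd e) h1 v2
  | inl : FGEval h e h1 v → FGEval h (.inl e) h1 (.inl v)
  | inr : FGEval h e h1 v → FGEval h (.inr e) h1 (.inr v)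
  | caseL : FGEval h e h1 (.inl v) → FGEval h1 (e1.subst v 0) h2 w →
      FGEval h (.case e e1 e2) h2 w
  | caseR : FGEval h e h1 (.inr v) → FGEval h1 (e2.subst v 0) h2 w →
      FGEval h (.case e e1 e2) h2 w
  | new : FGEval h e h1 v → FGEval h (.new e) (h1 ++ [v]) (.loc h1.length)
  | deref : FGEval h e h1 (.loc n) → h1[n]? = some v → FGEval h (.deref e) h1 v
  | assign : FGEval h e1 h1 (.loc n) → FGEval h1 e2 h2 v →
      FGEval h (.assign e1 e2) (h2.set n v) .unit

/-! ## CG: pure big-step evaluation (no heap) and forcing semantics over heaps -/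

/-- Pure (heap-free) big-step evaluation for CG.  Monadic expressions are
suspended computations and evaluate to themselves. -/
inductive CGPure : Exp → Exp → Prop where
  | lam : CGPure (.lam e) (.lam e)
  | tt : CGPure .tt .tt
  | ff : CGPure .ff .ff
  | unit : CGPure .unit .unit
  | loc : CGPure (.loc n) (.loc n)
  | app : CGPure e1 (.lam e) → CGPure e2 v2 → CGPure (e.subst v2 0) v →
      CGPure (.app e1 e2) v
  | pair : CGPure e1 v1 → CGPure e2 v2 → CGPure (.pair e1 e2) (.pair v1 v2)
  | fst : CGPure e (.pair v1 v2) → CGPure (.fst e) v1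
  | snd : CGPure e (.pair v1 v2) → CGPure (.snd e) v2
  | inl : CGPure e v → CGPure (.inl e) (.inl v)
  | inr : CGPure e v → CGPure (.inr e) (.inr v)
  | caseL : CGPure e (.inl v) → CGPure (e1.subst v 0) w → CGPure (.case e e1 e2) w
  | caseR : CGPure e (.inr v) → CGPure (e2.subst v 0) w → CGPure (.case e e1 e2) w
  | label : CGPure e v → CGPure (.label e) (.label v)
  | ret : CGPure (.ret e) (.ret e)
  | bind : CGPure (.bind e1 e2) (.bind e1 e2)
  | unlabel : CGPure (.unlabel e) (.unlabel e)
  | toLabeled : CGPure (.toLabeled e) (.toLabeled e)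
  | new : CGPure (.new e) (.new e)
  | deref : CGPure (.deref e) (.deref e)
  | assign : CGPure (.assign e1 e2) (.assign e1 e2)

/-- Forcing semantics for CG's monadic computations: actually performs heap
reads, writes and allocations. -/
inductive CGForce : Heap → Exp → Heap → Exp → Prop where
  | ret : CGPure e (.ret e0) → CGPure e0 v → CGForce h e h v
  | bind : CGPure e (.bind e1 e2) → CGForce h e1 h1 v1 →
      CGForce h1 (e2.subst v1 0) h2 v → CGForce h e h2 v
  | unlabel : CGPure e (.unlabel e0) → CGPure e0 (.label v) → CGForce h e h v
  | toLabeled : CGPure e (.toLabeled e0) → CGForce h e0 h1 v →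
      CGForce h e h1 (.label v)
  | new : CGPure e (.new e0) → CGPure e0 v → CGForce h e (h ++ [v]) (.loc h.length)
  | deref : CGPure e (.deref e0) → CGPure e0 (.loc n) → h[n]? = some v →
      CGForce h e h v
  | assign : CGPure e (.assign e1 e2) → CGPure e1 (.loc n) → CGPure e2 v →
      CGForce h e (h.set n v) .unit

/-! ## FG types (every type constructor carries its outer security label) -/

inductive FGTy (L : Type) : Type where
  | bool (l : L)
  | unit (l : L)
  | fn (t1 : FGTy L) (le : L) (t2 : FGTy L) (l : L)
  | prod (t1 t2 : FGTy L) (l : L)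
  | sum (t1 t2 : FGTy L) (l : L)
  | ref (t : FGTy L) (l : L)

/-- The outer label of an FG type (`(A^ℓ).lab = ℓ`).
`τ.lab ≥ ℓ` is the protection judgment `τ ↘ ℓ`. -/
def FGTy.lab {L : Type} : FGTy L → L
  | .bool l => l
  | .unit l => l
  | .fn _ _ _ l => l
  | .prod _ _ l => l
  | .sum _ _ l => l
  | .ref _ l => l

/-- FG subtyping: structural, covariant in security labels, contravariant in
the pc-label of function types, invariant in the content type of references. -/
inductive FGSub {L : Type} [Lattice L] [BoundedOrder L] : FGTy L → FGTy L → Prop where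
  | bool : l ≤ l' → FGSub (.bool l) (.bool l')
  | unit : l ≤ l' → FGSub (.unit l) (.unit l')
  | fn : FGSub τ1' τ1 → le' ≤ le → FGSub τ2 τ2' → l ≤ l' →
      FGSub (.fn τ1 le τ2 l) (.fn τ1' le' τ2' l')
  | prod : FGSub τ1 τ1' → FGSub τ2 τ2' → l ≤ l' →
      FGSub (.prod τ1 τ2 l) (.prod τ1' τ2' l')
  | sum : FGSub τ1 τ1' → FGSub τ2 τ2' → l ≤ l' →
      FGSub (.sum τ1 τ2 l) (.sum τ1' τ2' l')
  | ref : l ≤ l' → FGSub (.ref τ l) (.ref τ l')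

/-- The FG typing judgment `Γ ⊢_pc e : τ`. -/
inductive FGTyped {L : Type} [Lattice L] [BoundedOrder L] :
    List (FGTy L) → L → Exp → FGTy L → Prop where
  | var : Γ[n]? = some τ → FGTyped Γ pc (.var n) τ
  | tt : FGTyped Γ pc .tt (.bool ⊥)
  | ff : FGTyped Γ pc .ff (.bool ⊥)
  | unit : FGTyped Γ pc .unit (.unit ⊥)
  | lam : FGTyped (τ1 :: Γ) le e τ2 → FGTyped Γ pc (.lam e) (.fn τ1 le τ2 ⊥)
  | app : FGTyped Γ pc e1 (.fn τ1 le τ2 l) → FGTyped Γ pc e2 τ1 →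
      l ⊔ pc ≤ le → l ≤ τ2.lab → FGTyped Γ pc (.app e1 e2) τ2
  | pair : FGTyped Γ pc e1 τ1 → FGTyped Γ pc e2 τ2 →
      FGTyped Γ pc (.pair e1 e2) (.prod τ1 τ2 ⊥)
  | fst : FGTyped Γ pc e (.prod τ1 τ2 l) → l ≤ τ1.lab → FGTyped Γ pc (.fst e) τ1
  | snd : FGTyped Γ pc e (.prod τ1 τ2 l) → l ≤ τ2.lab → FGTyped Γ pc (.snd e) τ2
  | inl : FGTyped Γ pc e τ1 → FGTyped Γ pc (.inl e) (.sum τ1 τ2 ⊥)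
  | inr : FGTyped Γ pc e τ2 → FGTyped Γ pc (.inr e) (.sum τ1 τ2 ⊥)
  | case : FGTyped Γ pc e (.sum τ1 τ2 l) → FGTyped (τ1 :: Γ) (pc ⊔ l) e1 τ →
      FGTyped (τ2 :: Γ) (pc ⊔ l) e2 τ → l ≤ τ.lab →
      FGTyped Γ pc (.case e e1 e2) τ
  | new : FGTyped Γ pc e τ → pc ≤ τ.lab → FGTyped Γ pc (.new e) (.ref τ ⊥)
  | deref : FGTyped Γ pc e (.ref τ l) → FGSub τ τ' → l ≤ τ'.lab →
      FGTyped Γ pc (.deref e) τ'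
  | assign : FGTyped Γ pc e1 (.ref τ l) → FGTyped Γ pc e2 τ →
      pc ⊔ l ≤ τ.lab → FGTyped Γ pc (.assign e1 e2) (.unit ⊥)
  | sub : FGTyped Γ pc' e τ' → FGSub τ' τ → pc ≤ pc' → FGTyped Γ pc e τ

/-! ## CG types -/

inductive CGTy (L : Type) : Type where
  | bool
  | unit
  | fn (t1 t2 : CGTy L)
  | prod (t1 t2 : CGTy L)
  | sum (t1 t2 : CGTy L)
  | ref (l : L) (t : CGTy L)
  | labeled (l : L) (t : CGTy L)
  | monad (l1 l2 : L) (t : CGTy L)   -- CG ℓ1 ℓ2 τ : pc-label ℓ1, taint label ℓ2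

/-- CG subtyping: `Labeled ℓ τ` covariant in `ℓ` and `τ`; `CG ℓ1 ℓ2 τ`
contravariant in `ℓ1`, covariant in `ℓ2` and `τ`. -/
inductive CGSub {L : Type} [Lattice L] [BoundedOrder L] : CGTy L → CGTy L → Prop where
  | bool : CGSub .bool .bool
  | unit : CGSub .unit .unit
  | fn : CGSub τ1' τ1 → CGSub τ2 τ2' → CGSub (.fn τ1 τ2) (.fn τ1' τ2')
  | prod : CGSub τ1 τ1' → CGSub τ2 τ2' → CGSub (.prod τ1 τ2) (.prod τ1' τ2')
  | sum : CGSub τ1 τ1' → CGSub τ2 τ2' → CGSub (.sum τ1 τ2) (.sum τ1' τ2')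
  | ref : CGSub (.ref l τ) (.ref l τ)
  | labeled : CGSub τ τ' → l ≤ l' → CGSub (.labeled l τ) (.labeled l' τ')
  | monad : l1' ≤ l1 → l2 ≤ l2' → CGSub τ τ' →
      CGSub (.monad l1 l2 τ) (.monad l1' l2' τ')

/-- The CG typing judgment `Γ ⊢ e : τ`. -/
inductive CGTyped {L : Type} [Lattice L] [BoundedOrder L] :
    List (CGTy L) → Exp → CGTy L → Prop where
  | var : Γ[n]? = some τ → CGTyped Γ (.var n) τ
  | tt : CGTyped Γ .tt .bool
  | ff : CGTyped Γ .ff .bool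
  | unit : CGTyped Γ .unit .unit
  | lam : CGTyped (τ1 :: Γ) e τ2 → CGTyped Γ (.lam e) (.fn τ1 τ2)
  | app : CGTyped Γ e1 (.fn τ1 τ2) → CGTyped Γ e2 τ1 → CGTyped Γ (.app e1 e2) τ2
  | pair : CGTyped Γ e1 τ1 → CGTyped Γ e2 τ2 → CGTyped Γ (.pair e1 e2) (.prod τ1 τ2)
  | fst : CGTyped Γ e (.prod τ1 τ2) → CGTyped Γ (.fst e) τ1
  | snd : CGTyped Γ e (.prod τ1 τ2) → CGTyped Γ (.snd e) τ2
  | inl : CGTyped Γ e τ1 → CGTyped Γ (.inl e) (.sum τ1 τ2)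
  | inr : CGTyped Γ e τ2 → CGTyped Γ (.inr e) (.sum τ1 τ2)
  | case : CGTyped Γ e (.sum τ1 τ2) → CGTyped (τ1 :: Γ) e1 τ →
      CGTyped (τ2 :: Γ) e2 τ → CGTyped Γ (.case e e1 e2) τ
  | ret : CGTyped Γ e τ → CGTyped Γ (.ret e) (.monad ⊤ ⊥ τ)
  | bind : CGTyped Γ e1 (.monad l1 l2 τ) → CGTyped (τ :: Γ) e2 (.monad l3 l4 τ') →
      l ≤ l1 → l ≤ l3 → l2 ≤ l3 → l2 ≤ l4 →
      CGTyped Γ (.bind e1 e2) (.monad l l4 τ')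
  | label : CGTyped Γ e τ → CGTyped Γ (.label e) (.labeled l τ)
  | unlabel : CGTyped Γ e (.labeled l τ) → CGTyped Γ (.unlabel e) (.monad ⊤ l τ)
  | new : CGTyped Γ e (.labeled l τ) → CGTyped Γ (.new e) (.monad l ⊥ (.ref l τ))
  | deref : CGTyped Γ e (.ref l' τ) → CGTyped Γ (.deref e) (.monad ⊤ ⊥ (.labeled l' τ))
  | assign : CGTyped Γ e1 (.ref l τ) → CGTyped Γ e2 (.labeled l τ) →
      CGTyped Γ (.assign e1 e2) (.monad l ⊥ .unit)
  | toLabeled : CGTyped Γ e (.monad l l' τ) →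
      CGTyped Γ (.toLabeled e) (.monad l ⊥ (.labeled l' τ))
  | sub : CGTyped Γ e τ' → CGSub τ' τ → CGTyped Γ e τ

/-! ## The CG-to-FG type translation ⟦·⟧ -/

def toFG {L : Type} [Lattice L] [BoundedOrder L] : CGTy L → FGTy L
  | .bool => .bool ⊥
  | .unit => .unit ⊥
  | .fn τ1 τ2 => .fn (toFG τ1) ⊤ (toFG τ2) ⊥
  | .prod τ1 τ2 => .prod (toFG τ1) (toFG τ2) ⊥
  | .sum τ1 τ2 => .sum (toFG τ1) (toFG τ2) ⊥
  | .ref l τ => .ref (.sum (toFG τ) (.unit ⊥) l) ⊥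
  | .labeled l τ => .sum (toFG τ) (.unit ⊥) l
  | .monad l1 l2 τ => .fn (.unit ⊥) l1 (.sum (toFG τ) (.unit ⊥) l2) ⊥

/-! ## The FG-to-CG type translation: ⟦A^ℓ⟧ = Labeled ℓ ⟨A⟩ -/

/-- `⟨A⟩`: translation of the unlabeled part of an FG type. -/
def trA {L : Type} [Lattice L] [BoundedOrder L] : FGTy L → CGTy L
  | .bool _ => .bool
  | .unit _ => .unit
  | .fn τ1 le τ2 _ =>
      .fn (.labeled τ1.lab (trA τ1)) (.monad le ⊥ (.labeled τ2.lab (trA τ2)))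
  | .prod τ1 τ2 _ => .prod (.labeled τ1.lab (trA τ1)) (.labeled τ2.lab (trA τ2))
  | .sum τ1 τ2 _ => .sum (.labeled τ1.lab (trA τ1)) (.labeled τ2.lab (trA τ2))
  | .ref τ _ => .ref τ.lab (trA τ)

/-- `⟦A^ℓ⟧ = Labeled ℓ ⟨A⟩`. -/
def toCG {L : Type} [Lattice L] [BoundedOrder L] (τ : FGTy L) : CGTy L :=
  .labeled τ.lab (trA τ)

/-! ## CG-to-FG expression translation `Γ ⊢ e : τ ⇝ e_F` -/

inductive CG2FG {L : Type} [Lattice L] [BoundedOrder L] :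
    List (CGTy L) → Exp → CGTy L → Exp → Prop where
  | var : Γ[n]? = some τ → CG2FG Γ (.var n) τ (.var n)
  | tt : CG2FG Γ .tt .bool .tt
  | ff : CG2FG Γ .ff .bool .ff
  | unit : CG2FG Γ .unit .unit .unit
  | lam : CG2FG (τ1 :: Γ) e τ2 eF → CG2FG Γ (.lam e) (.fn τ1 τ2) (.lam eF)
  | app : CG2FG Γ e1 (.fn τ1 τ2) eF1 → CG2FG Γ e2 τ1 eF2 →
      CG2FG Γ (.app e1 e2) τ2 (.app eF1 eF2)
  | pair : CG2FG Γ e1 τ1 eF1 → CG2FG Γ e2 τ2 eF2 →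
      CG2FG Γ (.pair e1 e2) (.prod τ1 τ2) (.pair eF1 eF2)
  | fst : CG2FG Γ e (.prod τ1 τ2) eF → CG2FG Γ (.fst e) τ1 (.fst eF)
  | snd : CG2FG Γ e (.prod τ1 τ2) eF → CG2FG Γ (.snd e) τ2 (.snd eF)
  | inl : CG2FG Γ e τ1 eF → CG2FG Γ (.inl e) (.sum τ1 τ2) (.inl eF)
  | inr : CG2FG Γ e τ2 eF → CG2FG Γ (.inr e) (.sum τ1 τ2) (.inr eF)
  | case : CG2FG Γ e (.sum τ1 τ2) eF → CG2FG (τ1 :: Γ) e1 τ eF1 →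
      CG2FG (τ2 :: Γ) e2 τ eF2 → CG2FG Γ (.case e e1 e2) τ (.case eF eF1 eF2)
  | label : CG2FG Γ e τ eF → CG2FG Γ (.label e) (.labeled l τ) (.inl eF)
  | unlabel : CG2FG Γ e (.labeled l τ) eF →
      CG2FG Γ (.unlabel e) (.monad ⊤ l τ) (.lam (eF.shift 0))
  | toLabeled : CG2FG Γ e (.monad l1 l2 τ) eF →
      CG2FG Γ (.toLabeled e) (.monad l1 ⊥ (.labeled l2 τ))
        (.lam (.inl (.app (eF.shift 0) .unit)))
  | ret : CG2FG Γ e τ eF → CG2FG Γ (.ret e) (.monad ⊤ ⊥ τ) (.lam (.inl (eF.shift 0)))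
  | bind : CG2FG Γ e1 (.monad l1 l2 τ) eF1 →
      CG2FG (τ :: Γ) e2 (.monad l3 l4 τ') eF2 →
      l ≤ l1 → l ≤ l3 → l2 ≤ l3 → l2 ≤ l4 →
      CG2FG Γ (.bind e1 e2) (.monad l l4 τ')
        (.lam (.case (.app (eF1.shift 0) .unit) (.app (eF2.shift 1) .unit)
          (.inr .unit)))
  | new : CG2FG Γ e (.labeled l τ) eF →
      CG2FG Γ (.new e) (.monad l ⊥ (.ref l τ)) (.lam (.inl (.new (eF.shift 0))))
  | deref : CG2FG Γ e (.ref l' τ) eF →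
      CG2FG Γ (.deref e) (.monad ⊤ ⊥ (.labeled l' τ))
        (.lam (.inl (.deref (eF.shift 0))))
  | assign : CG2FG Γ e1 (.ref l τ) eF1 → CG2FG Γ e2 (.labeled l τ) eF2 →
      CG2FG Γ (.assign e1 e2) (.monad l ⊥ .unit)
        (.lam (.inl (.assign (eF1.shift 0) (eF2.shift 0))))
  | sub : CG2FG Γ e τ' eF → CGSub τ' τ → CG2FG Γ e τ eF

/-! ## FG-to-CG expression translation `Γ ⊢_pc e : τ ⇝ e_c` -/

/-- `coerce_taint ≜ λx. toLabeled(bind(x, y. unlabel y))`. -/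
def coerceTaint : Exp := .lam (.toLabeled (.bind (.var 0) (.unlabel (.var 0))))

inductive FG2CG {L : Type} [Lattice L] [BoundedOrder L] :
    List (FGTy L) → L → Exp → FGTy L → Exp → Prop where
  | var : Γ[n]? = some τ → FG2CG Γ pc (.var n) τ (.ret (.var n))
  | tt : FG2CG Γ pc .tt (.bool ⊥) (.ret (.label .tt))
  | ff : FG2CG Γ pc .ff (.bool ⊥) (.ret (.label .ff))
  | unit : FG2CG Γ pc .unit (.unit ⊥) (.ret (.label .unit))
  | lam : FG2CG (τ1 :: Γ) le e τ2 ec →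
      FG2CG Γ pc (.lam e) (.fn τ1 le τ2 ⊥) (.ret (.label (.lam ec)))
  | app : FG2CG Γ pc e1 (.fn τ1 le τ2 l) ec1 → FG2CG Γ pc e2 τ1 ec2 →
      l ⊔ pc ≤ le → l ≤ τ2.lab →
      FG2CG Γ pc (.app e1 e2) τ2
        (.app coerceTaint
          (.bind ec1 (.bind (ec2.shift 0)
            (.bind (.unlabel (.var 1)) (.app (.var 0) (.var 1))))))
  | pair : FG2CG Γ pc e1 τ1 ec1 → FG2CG Γ pc e2 τ2 ec2 →
      FG2CG Γ pc (.pair e1 e2) (.prod τ1 τ2 ⊥)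
        (.bind ec1 (.bind (ec2.shift 0) (.ret (.label (.pair (.var 1) (.var 0))))))
  | fst : FG2CG Γ pc e (.prod τ1 τ2 l) ec → l ≤ τ1.lab →
      FG2CG Γ pc (.fst e) τ1
        (.app coerceTaint
          (.bind ec (.bind (.unlabel (.var 0)) (.ret (.fst (.var 0))))))
  | snd : FG2CG Γ pc e (.prod τ1 τ2 l) ec → l ≤ τ2.lab →
      FG2CG Γ pc (.snd e) τ2
        (.app coerceTaint
          (.bind ec (.bind (.unlabel (.var 0)) (.ret (.snd (.var 0))))))
  | inl : FG2CG Γ pc e τ1 ec →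
      FG2CG Γ pc (.inl e) (.sum τ1 τ2 ⊥) (.bind ec (.ret (.label (.inl (.var 0)))))
  | inr : FG2CG Γ pc e τ2 ec →
      FG2CG Γ pc (.inr e) (.sum τ1 τ2 ⊥) (.bind ec (.ret (.label (.inr (.var 0)))))
  | case : FG2CG Γ pc e (.sum τ1 τ2 l) ec →
      FG2CG (τ1 :: Γ) (pc ⊔ l) e1 τ ec1 → FG2CG (τ2 :: Γ) (pc ⊔ l) e2 τ ec2 →
      l ≤ τ.lab →
      FG2CG Γ pc (.case e e1 e2) τ
        (.app coerceTaint
          (.bind ec (.bind (.unlabel (.var 0))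
            (.case (.var 0) ((ec1.shift 1).shift 1) ((ec2.shift 1).shift 1)))))
  | new : FG2CG Γ pc e τ ec → pc ≤ τ.lab →
      FG2CG Γ pc (.new e) (.ref τ ⊥)
        (.bind ec (.bind (.new (.var 0)) (.ret (.label (.var 0)))))
  | deref : FG2CG Γ pc e (.ref τ l) ec → FGSub τ τ' → l ≤ τ'.lab →
      FG2CG Γ pc (.deref e) τ'
        (.app coerceTaint
          (.bind ec (.bind (.unlabel (.var 0)) (.deref (.var 0)))))
  | assign : FG2CG Γ pc e1 (.ref τ l) ec1 → FG2CG Γ pc e2 τ ec2 →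
      pc ⊔ l ≤ τ.lab →
      FG2CG Γ pc (.assign e1 e2) (.unit ⊥)
        (.bind (.toLabeled (.bind ec1 (.bind (ec2.shift 0)
          (.bind (.unlabel (.var 1)) (.assign (.var 0) (.var 1))))))
          (.ret (.label .unit)))
  | sub : FG2CG Γ pc' e τ' ec → FGSub τ' τ → pc ≤ pc' → FG2CG Γ pc e τ ec

/-! ### De Bruijn calculus -/

namespace Exp

theorem shift_shift (e : Exp) : ∀ {i c : ℕ}, i ≤ c →
    (e.shift i).shift (c + 1) = (e.shift c).shift i := by
  induction e with
  | var n =>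
    intro i c h
    simp only [shift]
    split_ifs <;> simp only [shift] <;> split_ifs <;> first | rfl | omega
  | _ => intro i c h; simp_all [shift]

/-- A variable freshly made room for by `shift` does not occur. -/
theorem subst_shift_cancel (e : Exp) : ∀ (v : Exp) (i : ℕ), (e.shift i).subst v i = e := by
  induction e with
  | var n =>
    intro v i
    simp only [shift]
    split_ifs <;> simp only [subst] <;> split_ifs <;> first | rfl | omega
  | _ => intro v i; simp_all [shift, subst]

theorem subst_shift (e : Exp) : ∀ (v : Exp) {i k : ℕ}, i ≤ k →
    (e.shift i).subst (v.shift i) (k + 1) = (e.subst v k).shift i := by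
  induction e with
  | var n =>
    intro v i k h
    simp only [shift, subst]
    split_ifs <;> simp only [shift, subst] <;> split_ifs <;>
      first | rfl | omega | (congr 1; omega)
  | _ =>
    intro v i k h
    simp_all [shift, subst, ← shift_shift v (Nat.zero_le i)]

/-- The translation of CG into FG as a function on raw expressions: it never inspects types,
so it can be read off from any `CG2FG` derivation. Locations, which occur only at run time, are
translated to themselves. -/
def transl : Exp → Exp
  | var n => var n
  | lam e => lam e.transl
  | app e1 e2 => app e1.transl e2.transl
  | pair e1 e2 => pair e1.transl e2.transl
  | fst e => fst e.transl
  | snd e => snd e.transl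
  | inl e => inl e.transl
  | inr e => inr e.transl
  | case e e1 e2 => case e.transl e1.transl e2.transl
  | tt => tt
  | ff => ff
  | unit => unit
  | loc n => loc n
  | label e => inl e.transl
  | unlabel e => lam (e.transl.shift 0)
  | toLabeled e => lam (inl (app (e.transl.shift 0) unit))
  | ret e => lam (inl (e.transl.shift 0))
  | bind e1 e2 =>
      lam (case (app (e1.transl.shift 0) unit) (app (e2.transl.shift 1) unit) (inr unit))
  | new e => lam (inl (new (e.transl.shift 0)))
  | deref e => lam (inl (deref (e.transl.shift 0)))
  | assign e1 e2 => lam (inl (assign (e1.transl.shift 0) (e2.transl.shift 0)))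

theorem transl_shift (e : Exp) : ∀ c : ℕ, (e.shift c).transl = e.transl.shift c := by
  induction e with
  | var n => intro c; simp only [shift, transl]; split_ifs <;> rfl
  | _ => intro c; simp_all [shift, transl, shift_shift]

theorem transl_subst (e : Exp) : ∀ (v : Exp) (k : ℕ),
    (e.subst v k).transl = e.transl.subst v.transl k := by
  induction e with
  | var n => intro v k; simp only [subst, transl]; split_ifs <;> rfl
  | bind e1 e2 ih1 ih2 =>
    intro v k
    have h2 : (e2.transl.shift 1).subst ((v.transl.shift 0).shift 0) (k + 1 + 1) =
        (e2.transl.subst (v.transl.shift 0) (k + 1)).shift 1 := by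
      rw [← shift_shift v.transl (le_refl 0)]
      exact subst_shift _ _ (by omega)
    simp_all [subst, transl, transl_shift, subst_shift]
  | _ => intro v k; simp_all [subst, transl, transl_shift, subst_shift]

/-- For a suspended computation `m`, the body of the thunk `m.transl` after its dummy argument
has been supplied; `none` on all other expressions. -/
def thunkBody : Exp → Option Exp
  | ret e => some (inl e.transl)
  | bind e1 e2 => some (case (app e1.transl unit) (app e2.transl unit) (inr unit))
  | unlabel e => some e.transl
  | toLabeled e => some (inl (app e.transl unit))
  | new e => some (inl (new e.transl))
  | deref e => some (inl (deref e.transl))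
  | assign e1 e2 => some (inl (assign e1.transl e2.transl))
  | _ => none

theorem transl_of_thunkBody {m b : Exp} (hm : m.thunkBody = some b) :
    ∃ b0, m.transl = lam b0 ∧ b0.subst unit 0 = b := by
  cases m <;> simp only [thunkBody, Option.some.injEq, reduceCtorEq] at hm <;> subst hm <;>
    exact ⟨_, rfl, by simp [subst, shift, subst_shift_cancel]⟩

end Exp

/-! ### Simple types -/

/-- CG types with all security labels erased. Subtyping only changes labels, so it disappears. -/
inductive STy : Type where
  | bool
  | unit
  | fn (t1 t2 : STy)
  | prod (t1 t2 : STy)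
  | sum (t1 t2 : STy)
  | ref (t : STy)
  | labeled (t : STy)
  | monad (t : STy)

/-- Erasure of security labels. -/
def CGTy.erase {L : Type} : CGTy L → STy
  | .bool => .bool
  | .unit => .unit
  | .fn t1 t2 => .fn t1.erase t2.erase
  | .prod t1 t2 => .prod t1.erase t2.erase
  | .sum t1 t2 => .sum t1.erase t2.erase
  | .ref _ t => .ref t.erase
  | .labeled _ t => .labeled t.erase
  | .monad _ _ t => .monad t.erase

theorem CGSub.erase_eq {L : Type} [Lattice L] [BoundedOrder L] {s t : CGTy L}
    (h : CGSub s t) : s.erase = t.erase := by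
  induction h <;> simp_all [CGTy.erase]

/-- Label-free typing of CG expressions relative to a store typing `S`, which makes run-time
locations typable. The entry `S[n]? = some t` says that location `n` holds a `labeled t`. -/
inductive HasTy (S : List STy) : List STy → Exp → STy → Prop where
  | var : Γ[n]? = some t → HasTy S Γ (.var n) t
  | tt : HasTy S Γ .tt .bool
  | ff : HasTy S Γ .ff .bool
  | unit : HasTy S Γ .unit .unit
  | loc : S[n]? = some t → HasTy S Γ (.loc n) (.ref t)
  | lam : HasTy S (t1 :: Γ) e t2 → HasTy S Γ (.lam e) (.fn t1 t2)
  | app : HasTy S Γ e1 (.fn t1 t2) → HasTy S Γ e2 t1 → HasTy S Γ (.app e1 e2) t2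
  | pair : HasTy S Γ e1 t1 → HasTy S Γ e2 t2 → HasTy S Γ (.pair e1 e2) (.prod t1 t2)
  | fst : HasTy S Γ e (.prod t1 t2) → HasTy S Γ (.fst e) t1
  | snd : HasTy S Γ e (.prod t1 t2) → HasTy S Γ (.snd e) t2
  | inl : HasTy S Γ e t1 → HasTy S Γ (.inl e) (.sum t1 t2)
  | inr : HasTy S Γ e t2 → HasTy S Γ (.inr e) (.sum t1 t2)
  | case : HasTy S Γ e (.sum t1 t2) → HasTy S (t1 :: Γ) e1 t → HasTy S (t2 :: Γ) e2 t →
      HasTy S Γ (.case e e1 e2) t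
  | ret : HasTy S Γ e t → HasTy S Γ (.ret e) (.monad t)
  | bind : HasTy S Γ e1 (.monad t) → HasTy S (t :: Γ) e2 (.monad t') →
      HasTy S Γ (.bind e1 e2) (.monad t')
  | label : HasTy S Γ e t → HasTy S Γ (.label e) (.labeled t)
  | unlabel : HasTy S Γ e (.labeled t) → HasTy S Γ (.unlabel e) (.monad t)
  | new : HasTy S Γ e (.labeled t) → HasTy S Γ (.new e) (.monad (.ref t))
  | deref : HasTy S Γ e (.ref t) → HasTy S Γ (.deref e) (.monad (.labeled t))
  | assign : HasTy S Γ e1 (.ref t) → HasTy S Γ e2 (.labeled t) →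
      HasTy S Γ (.assign e1 e2) (.monad .unit)
  | toLabeled : HasTy S Γ e (.monad t) → HasTy S Γ (.toLabeled e) (.monad (.labeled t))

theorem CG2FG.eq_transl {L : Type} [Lattice L] [BoundedOrder L] {Γ : List (CGTy L)}
    {e eF : Exp} {t : CGTy L} (h : CG2FG Γ e t eF) : eF = e.transl := by
  induction h <;> simp_all only [Exp.transl]

theorem CG2FG.hasTy {L : Type} [Lattice L] [BoundedOrder L] {Γ : List (CGTy L)}
    {e eF : Exp} {t : CGTy L} (h : CG2FG Γ e t eF) :
    HasTy [] (Γ.map CGTy.erase) e t.erase := by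
  induction h with
  | sub _ hs ih => exact hs.erase_eq ▸ ih
  | var hn => exact .var (by simp [hn])
  | _ =>
    simp_all only [CGTy.erase, List.map_cons]
    constructor <;> assumption

theorem HasTy.store_mono {S S' : List STy} (hS : S <+: S') {Γ : List STy} {e : Exp} {t : STy}
    (h : HasTy S Γ e t) : HasTy S' Γ e t := by
  induction h with
  | loc hn =>
    obtain ⟨R, rfl⟩ := hS
    exact .loc (by grind)
  | _ => constructor <;> assumption

theorem HasTy.shift {S : List STy} {Γ : List STy} {u : STy} (e : Exp) :
    ∀ {Δ : List STy} {t : STy}, HasTy S (Δ ++ Γ) e t →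
      HasTy S (Δ ++ u :: Γ) (e.shift Δ.length) t := by
  induction e with
  | var n =>
    intro Δ t h
    cases h with | var hn =>
    simp only [Exp.shift]
    split_ifs <;> exact .var (by grind)
  | lam e ih =>
    intro Δ t h
    cases h with | lam h => exact .lam (ih (Δ := _ :: Δ) h)
  | case e e1 e2 ih ih1 ih2 =>
    intro Δ t h
    cases h with | case h h1 h2 =>
    exact .case (ih h) (ih1 (Δ := _ :: Δ) h1) (ih2 (Δ := _ :: Δ) h2)
  | bind e1 e2 ih1 ih2 =>
    intro Δ t h
    cases h with | bind h1 h2 => exact .bind (ih1 h1) (ih2 (Δ := _ :: Δ) h2)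
  | _ => intro Δ t h; cases h <;> constructor <;> solve_by_elim

theorem HasTy.subst {S : List STy} {Γ : List STy} {u : STy} (e : Exp) :
    ∀ {Δ : List STy} {t : STy} {v : Exp}, HasTy S (Δ ++ u :: Γ) e t → HasTy S (Δ ++ Γ) v u →
      HasTy S (Δ ++ Γ) (e.subst v Δ.length) t := by
  induction e with
  | var n =>
    intro Δ t v h hv
    cases h with | var hn =>
    simp only [Exp.subst]
    split_ifs with h1 h2
    · have : u = t := by grind
      exact this ▸ hv
    · exact .var (by grind)
    · exact .var (by grind)
  | lam e ih =>
    intro Δ t v h hv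
    cases h with | lam h => exact .lam (ih (Δ := _ :: Δ) h (hv.shift v (Δ := [])))
  | case e e1 e2 ih ih1 ih2 =>
    intro Δ t v h hv
    cases h with | case h h1 h2 =>
    exact .case (ih h hv) (ih1 (Δ := _ :: Δ) h1 (hv.shift v (Δ := [])))
      (ih2 (Δ := _ :: Δ) h2 (hv.shift v (Δ := [])))
  | bind e1 e2 ih1 ih2 =>
    intro Δ t v h hv
    cases h with | bind h1 h2 =>
    exact .bind (ih1 h1 hv) (ih2 (Δ := _ :: Δ) h2 (hv.shift v (Δ := [])))
  | _ => intro Δ t v h hv; cases h <;> constructor <;> solve_by_elim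

theorem HasTy.subst_zero {S : List STy} {u t : STy} {e v : Exp}
    (h : HasTy S [u] e t) (hv : HasTy S [] v u) : HasTy S [] (e.subst v 0) t :=
  HasTy.subst e (Δ := []) h hv

/-! ### Type preservation for CG -/

theorem CGPure.val {e v : Exp} (h : CGPure e v) : CGVal v := by
  induction h with
  | fst _ ih => cases ih; assumption
  | snd _ ih => cases ih; assumption
  | _ => first | assumption | (constructor <;> assumption)

theorem CGPure.preservation {S : List STy} {e v : Exp} (h : CGPure e v) :
    ∀ {t : STy}, HasTy S [] e t → HasTy S [] v t := by
  induction h with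
  | app _ _ _ ih1 ih2 ih3 =>
    intro t ht
    cases ht with | app h1 h2 =>
    cases ih1 h1 with | lam hb => exact ih3 (hb.subst_zero (ih2 h2))
  | pair _ _ ih1 ih2 =>
    intro t ht
    cases ht with | pair h1 h2 => exact .pair (ih1 h1) (ih2 h2)
  | fst _ ih =>
    intro t ht
    cases ht with | fst h1 => cases ih h1; assumption
  | snd _ ih =>
    intro t ht
    cases ht with | snd h1 => cases ih h1; assumption
  | inl _ ih =>
    intro t ht
    cases ht with | inl h1 => exact .inl (ih h1)
  | inr _ ih =>
    intro t ht
    cases ht with | inr h1 => exact .inr (ih h1)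
  | caseL _ _ ih ih1 =>
    intro t ht
    cases ht with | case h h1 h2 =>
    cases ih h with | inl hv => exact ih1 (h1.subst_zero hv)
  | caseR _ _ ih ih1 =>
    intro t ht
    cases ht with | case h h1 h2 =>
    cases ih h with | inr hv => exact ih1 (h2.subst_zero hv)
  | label _ ih =>
    intro t ht
    cases ht with | label h1 => exact .label (ih h1)
  | _ => intro t ht; exact ht

/-- The heap `h` is well typed for the store typing `S`: same domain, and each cell holds a
closed labeled value of the prescribed type. -/
def HeapTy (S : List STy) (h : Heap) : Prop :=
  S.length = h.length ∧
    ∀ (n : ℕ) (t : STy) (v : Exp), S[n]? = some t → h[n]? = some v →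
      HasTy S [] v (.labeled t) ∧ CGVal v

theorem HeapTy.append {S : List STy} {h : Heap} {v : Exp} {t : STy} (hh : HeapTy S h)
    (hv : HasTy S [] v (.labeled t)) (hval : CGVal v) : HeapTy (S ++ [t]) (h ++ [v]) := by
  refine ⟨by simp [hh.1], fun n s w hs hw => ?_⟩
  have hlen := hh.1
  by_cases hn : n < S.length
  · have h1 := hh.2 n s w (by grind) (by grind)
    exact ⟨h1.1.store_mono (List.prefix_append _ _), h1.2⟩
  · have hs' : s = t := by grind
    have hw' : w = v := by grind
    subst hs' hw'
    exact ⟨hv.store_mono (List.prefix_append _ _), hval⟩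

theorem HeapTy.set {S : List STy} {h : Heap} {v : Exp} {t : STy} {n : ℕ} (hh : HeapTy S h)
    (hn : S[n]? = some t) (hv : HasTy S [] v (.labeled t)) (hval : CGVal v) :
    HeapTy S (h.set n v) := by
  refine ⟨by simp [hh.1], fun m s w hs hw => ?_⟩
  by_cases hm : n = m
  · subst hm
    have hs' : s = t := by grind
    have hw' : w = v := by grind
    subst hs' hw'
    exact ⟨hv, hval⟩
  · exact hh.2 m s w hs (by grind)

theorem CGForce.preservation {h h' : Heap} {e v : Exp} (hf : CGForce h e h' v) :
    ∀ {S : List STy} {t : STy}, HasTy S [] e (.monad t) → HeapTy S h →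
      ∃ S', S <+: S' ∧ HeapTy S' h' ∧ HasTy S' [] v t ∧ CGVal v := by
  induction hf with
  | ret hp hp0 =>
    intro S t ht hh
    cases hp.preservation ht with | ret h0 =>
    exact ⟨S, List.prefix_rfl, hh, hp0.preservation h0, hp0.val⟩
  | bind hp _ _ ih1 ih2 =>
    intro S t ht hh
    cases hp.preservation ht with | bind h1 h2 =>
    obtain ⟨S1, hS1, hh1, hv1, -⟩ := ih1 h1 hh
    obtain ⟨S2, hS2, hh2, hv2, hval⟩ := ih2 ((h2.store_mono hS1).subst_zero hv1) hh1
    exact ⟨S2, hS1.trans hS2, hh2, hv2, hval⟩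
  | unlabel hp hp0 =>
    intro S t ht hh
    cases hp.preservation ht with | unlabel h0 =>
    cases hp0.preservation h0 with | label hv =>
    cases hp0.val with | label hval =>
    exact ⟨S, List.prefix_rfl, hh, hv, hval⟩
  | toLabeled hp _ ih =>
    intro S t ht hh
    cases hp.preservation ht with | toLabeled h0 =>
    obtain ⟨S1, hS1, hh1, hv1, hval⟩ := ih h0 hh
    exact ⟨S1, hS1, hh1, .label hv1, .label hval⟩
  | new hp hp0 =>
    intro S t ht hh
    cases hp.preservation ht with | new h0 =>
    exact ⟨_, List.prefix_append _ _, hh.append (hp0.preservation h0) hp0.val,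
      .loc (by simp [← hh.1]), .loc⟩
  | deref hp hp0 hn =>
    intro S t ht hh
    cases hp.preservation ht with | deref h0 =>
    cases hp0.preservation h0 with | loc hl =>
    have h1 := hh.2 _ _ _ hl hn
    exact ⟨S, List.prefix_rfl, hh, h1.1, h1.2⟩
  | assign hp hp1 hp2 =>
    intro S t ht hh
    cases hp.preservation ht with | assign h1 h2 =>
    cases hp1.preservation h1 with | loc hl =>
    exact ⟨S, List.prefix_rfl, hh.set hl (hp2.preservation h2) hp2.val, .unit, .unit⟩

/-! ### CG evaluation is simulated by FG evaluation -/

theorem CGPure.simulation {e v : Exp} (h : CGPure e v) :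
    ∀ H : Heap, FGEval H e.transl H v.transl := by
  induction h with
  | app _ _ _ ih1 ih2 ih3 =>
    intro H
    exact .app (ih1 H) (ih2 H) (Exp.transl_subst _ _ _ ▸ ih3 H)
  | pair _ _ ih1 ih2 => intro H; exact .pair (ih1 H) (ih2 H)
  | fst _ ih => intro H; exact .fst (ih H)
  | snd _ ih => intro H; exact .snd (ih H)
  | inl _ ih => intro H; exact .inl (ih H)
  | inr _ ih => intro H; exact .inr (ih H)
  | label _ ih => intro H; exact .inl (ih H)
  | caseL _ _ ih ih1 =>
    intro H
    exact .caseL (ih H) (Exp.transl_subst _ _ _ ▸ ih1 H)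
  | caseR _ _ ih ih1 =>
    intro H
    exact .caseR (ih H) (Exp.transl_subst _ _ _ ▸ ih1 H)
  | _ => intro H; constructor

/-- Running the body of a thunk amounts to applying any expression that evaluates to it. -/
theorem FGEval.app_unit {e m b : Exp} {H H' : Heap} {w : Exp} (hp : CGPure e m)
    (hm : m.thunkBody = some b) (hb : FGEval H b H' w) :
    FGEval H (.app e.transl .unit) H' w := by
  obtain ⟨b0, h1, rfl⟩ := Exp.transl_of_thunkBody hm
  exact .app (h1 ▸ hp.simulation H) .unit hb

theorem CGForce.simulation {h h' : Heap} {e v : Exp} (hf : CGForce h e h' v) :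
    FGEval (h.map Exp.transl) (.app e.transl .unit) (h'.map Exp.transl) (.inl v.transl) := by
  induction hf with
  | ret hp hp0 => exact .app_unit hp rfl (.inl (hp0.simulation _))
  | bind hp _ _ ih1 ih2 =>
    refine .app_unit hp rfl (.caseL ih1 ?_)
    rw [Exp.transl_subst] at ih2
    exact ih2
  | unlabel hp hp0 => exact .app_unit hp rfl (hp0.simulation _)
  | toLabeled hp _ ih => exact .app_unit hp rfl (.inl ih)
  | @new e e0 v h hp hp0 =>
    have h1 := FGEval.new (hp0.simulation (h.map Exp.transl))
    rw [List.length_map] at h1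
    rw [List.map_append]
    exact .app_unit hp rfl (.inl h1)
  | deref hp hp0 hn =>
    exact .app_unit hp rfl (.inl (.deref (hp0.simulation _) (by simp [hn])))
  | assign hp hp1 hp2 =>
    rw [List.map_set]
    exact .app_unit hp rfl (.inl (.assign (hp1.simulation _) (hp2.simulation _)))

/-! ### FG evaluation of translated terms is reflected by CG -/

/-- Typing is essential here: a CG sum and a CG labeled value are both translated to an FG sum,
so an ill-typed stuck CG expression may have a translation that evaluates. -/
theorem CGPure.reflection {S : List STy} {H H' : Heap} {eF w : Exp} (hF : FGEval H eF H' w) :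
    ∀ {e : Exp} {t : STy}, eF = e.transl → HasTy S [] e t →
      ∃ v, CGPure e v ∧ w = v.transl ∧ H' = H := by
  induction hF with
  | lam | tt | ff | unit | loc =>
    intro e t he ht
    refine ⟨e, ?_, he, rfl⟩
    cases e <;> first | (constructor; done) | simp [Exp.transl] at he
  | app _ _ _ ih1 ih2 ih3 =>
    intro e t he ht
    cases e <;> simp only [Exp.transl, reduceCtorEq, Exp.app.injEq] at he
    cases ht with | app h1 h2 =>
    obtain ⟨f, hf, hfe, rfl⟩ := ih1 he.1 h1
    obtain ⟨v2, hv2, rfl, rfl⟩ := ih2 he.2 h2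
    cases hf.preservation h1 <;> have hval := hf.val <;> cases hval
    rename_i hb
    simp only [Exp.transl, Exp.lam.injEq] at hfe
    subst hfe
    obtain ⟨v, hv, rfl, rfl⟩ := ih3 (Exp.transl_subst _ _ _).symm
      (hb.subst_zero (hv2.preservation h2))
    exact ⟨v, .app hf hv2 hv, rfl, rfl⟩
  | pair _ _ ih1 ih2 =>
    intro e t he ht
    cases e <;> simp only [Exp.transl, reduceCtorEq, Exp.pair.injEq] at he
    cases ht with | pair h1 h2 =>
    obtain ⟨v1, hv1, rfl, rfl⟩ := ih1 he.1 h1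
    obtain ⟨v2, hv2, rfl, rfl⟩ := ih2 he.2 h2
    exact ⟨_, .pair hv1 hv2, rfl, rfl⟩
  | fst _ ih =>
    intro e t he ht
    cases e <;> simp only [Exp.transl, reduceCtorEq, Exp.fst.injEq] at he
    cases ht with | fst h1 =>
    obtain ⟨p, hp, hpe, rfl⟩ := ih he h1
    cases hp.preservation h1 <;> have hval := hp.val <;> cases hval
    simp only [Exp.transl, Exp.pair.injEq] at hpe
    exact ⟨_, .fst hp, hpe.1, rfl⟩
  | snd _ ih =>
    intro e t he ht
    cases e <;> simp only [Exp.transl, reduceCtorEq, Exp.snd.injEq] at he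
    cases ht with | snd h1 =>
    obtain ⟨p, hp, hpe, rfl⟩ := ih he h1
    cases hp.preservation h1 <;> have hval := hp.val <;> cases hval
    simp only [Exp.transl, Exp.pair.injEq] at hpe
    exact ⟨_, .snd hp, hpe.2, rfl⟩
  | inl _ ih =>
    intro e t he ht
    cases e <;> simp only [Exp.transl, reduceCtorEq, Exp.inl.injEq] at he
    · cases ht with | inl h1 =>
      obtain ⟨v, hv, rfl, rfl⟩ := ih he h1
      exact ⟨_, .inl hv, rfl, rfl⟩
    · cases ht with | label h1 =>
      obtain ⟨v, hv, rfl, rfl⟩ := ih he h1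
      exact ⟨_, .label hv, rfl, rfl⟩
  | inr _ ih =>
    intro e t he ht
    cases e <;> simp only [Exp.transl, reduceCtorEq, Exp.inr.injEq] at he
    cases ht with | inr h1 =>
    obtain ⟨v, hv, rfl, rfl⟩ := ih he h1
    exact ⟨_, .inr hv, rfl, rfl⟩
  | caseL _ _ ih ih1 =>
    intro e t he ht
    cases e <;> simp only [Exp.transl, reduceCtorEq, Exp.case.injEq] at he
    obtain ⟨he, rfl, rfl⟩ := he
    cases ht with | case h h1 h2 =>
    obtain ⟨p, hp, hpe, rfl⟩ := ih he h
    cases hp.preservation h <;> have hval := hp.val <;> cases hval <;>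
      simp only [Exp.transl, Exp.inl.injEq, reduceCtorEq] at hpe
    rename_i hv _
    subst hpe
    obtain ⟨v, hv, rfl, rfl⟩ := ih1 (Exp.transl_subst _ _ _).symm (h1.subst_zero hv)
    exact ⟨_, .caseL hp hv, rfl, rfl⟩
  | caseR _ _ ih ih1 =>
    intro e t he ht
    cases e <;> simp only [Exp.transl, reduceCtorEq, Exp.case.injEq] at he
    obtain ⟨he, rfl, rfl⟩ := he
    cases ht with | case h h1 h2 =>
    obtain ⟨p, hp, hpe, rfl⟩ := ih he h
    cases hp.preservation h <;> have hval := hp.val <;> cases hval <;>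
      simp only [Exp.transl, Exp.inr.injEq, reduceCtorEq] at hpe
    rename_i hv _
    subst hpe
    obtain ⟨v, hv, rfl, rfl⟩ := ih1 (Exp.transl_subst _ _ _).symm (h2.subst_zero hv)
    exact ⟨_, .caseR hp hv, rfl, rfl⟩
  | _ =>
    intro e t he ht
    cases e <;> simp only [Exp.transl, reduceCtorEq] at he

/-- Canonical forms at monadic type: a value is a suspended computation. -/
theorem HasTy.thunkBody {S : List STy} {m : Exp} {t : STy} (h : HasTy S [] m (.monad t))
    (hv : CGVal m) : ∃ b, m.thunkBody = some b ∧ CGPure m m := by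
  cases hv <;> cases h <;> exact ⟨_, rfl, by constructor⟩

theorem CGPure.eq_of_thunkBody {m v b : Exp} (hm : m.thunkBody = some b) (hp : CGPure m v) :
    v = m := by
  cases hp <;> first | rfl | simp [Exp.thunkBody] at hm

/-- Forcing depends only on the suspended computation an expression evaluates to. -/
theorem CGForce.of_pure {h h' : Heap} {e m v b : Exp} (hp : CGPure e m)
    (hm : m.thunkBody = some b) (hf : CGForce h m h' v) : CGForce h e h' v := by
  cases hf with
  | ret h1 h2 => exact .ret (h1.eq_of_thunkBody hm ▸ hp) h2
  | bind h1 h2 h3 => exact .bind (h1.eq_of_thunkBody hm ▸ hp) h2 h3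
  | unlabel h1 h2 => exact .unlabel (h1.eq_of_thunkBody hm ▸ hp) h2
  | toLabeled h1 h2 => exact .toLabeled (h1.eq_of_thunkBody hm ▸ hp) h2
  | new h1 h2 => exact .new (h1.eq_of_thunkBody hm ▸ hp) h2
  | deref h1 h2 h3 => exact .deref (h1.eq_of_thunkBody hm ▸ hp) h2 h3
  | assign h1 h2 h3 => exact .assign (h1.eq_of_thunkBody hm ▸ hp) h2 h3

/-- Besides applications of translated thunks, the induction on the FG derivation has to cover
the bodies of the two thunks that run further computations, `toLabeled` and `bind`. The bodies
of the remaining thunks only evaluate pure subterms and are handled by `CGPure.reflection`. -/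
theorem CGForce.reflection {H H' : Heap} {eF w : Exp} (hF : FGEval H eF H' w) :
    ∀ {S : List STy} {h : Heap} {e : Exp} {t : STy},
      (eF = .app e.transl .unit ∨
        (e.thunkBody = some eF ∧ ((∃ e0, e = .toLabeled e0) ∨ ∃ e1 e2, e = .bind e1 e2))) →
      HasTy S [] e (.monad t) → HeapTy S h → H = h.map Exp.transl →
      ∃ h' v, CGForce h e h' v ∧ w = .inl v.transl ∧ H' = h'.map Exp.transl := by
  induction hF with
  | app d1 d2 d3 _ _ ih3 =>
    intro S h e t he ht hh hH
    subst hH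
    rcases he with he | ⟨he, ⟨e0, rfl⟩ | ⟨e1, e2, rfl⟩⟩
    case inr.inl | inr.inr => simp [Exp.thunkBody] at he
    obtain ⟨rfl, rfl⟩ := Exp.app.inj he
    obtain ⟨m, hm, hme, rfl⟩ := CGPure.reflection d1 rfl ht
    cases d2
    have htm := hm.preservation ht
    obtain ⟨b, hb, hmm⟩ := htm.thunkBody hm.val
    obtain ⟨b0, hb0, hbs⟩ := Exp.transl_of_thunkBody hb
    obtain rfl := Exp.lam.inj (hme.trans hb0)
    rw [hbs] at d3 ih3
    suffices ∃ h' v, CGForce h m h' v ∧ _ = Exp.inl v.transl ∧ _ = h'.map Exp.transl by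
      obtain ⟨h', v, hf, hw, hH'⟩ := this
      exact ⟨h', v, hf.of_pure hm hb, hw, hH'⟩
    clear ht hme hb0 hbs hm
    cases m <;> simp only [Exp.thunkBody, Option.some.injEq, reduceCtorEq] at hb <;> subst hb
    case new =>
      cases htm with | new h1 =>
      cases d3 with | inl d =>
      cases d with | new d =>
      obtain ⟨v, hv, rfl, rfl⟩ := CGPure.reflection d rfl h1
      exact ⟨_, _, .new hmm hv, by simp [Exp.transl], by simp⟩
    case deref =>
      cases htm with | deref h1 =>
      cases d3 with | inl d =>
      cases d with | deref d hn =>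
      obtain ⟨v, hv, hve, rfl⟩ := CGPure.reflection d rfl h1
      cases hv.preservation h1 <;> have hval := hv.val <;> cases hval
      obtain rfl := Exp.loc.inj hve
      rw [List.getElem?_map, Option.map_eq_some_iff] at hn
      obtain ⟨u, hu, rfl⟩ := hn
      exact ⟨_, _, .deref hmm hv hu, rfl, rfl⟩
    case assign =>
      cases htm with | assign h1 h2 =>
      cases d3 with | inl d =>
      cases d with | assign d d' =>
      obtain ⟨v, hv, hve, rfl⟩ := CGPure.reflection d rfl h1
      cases hv.preservation h1 <;> have hval := hv.val <;> cases hval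
      obtain rfl := Exp.loc.inj hve
      obtain ⟨u, hu, rfl, rfl⟩ := CGPure.reflection d' rfl h2
      exact ⟨_, _, .assign hmm hv hu, rfl, by simp⟩
    case unlabel =>
      cases htm with | unlabel h1 =>
      obtain ⟨v, hv, rfl, rfl⟩ := CGPure.reflection d3 rfl h1
      cases hv.preservation h1 <;> have hval := hv.val <;> cases hval
      exact ⟨_, _, .unlabel hmm hv, rfl, rfl⟩
    case ret =>
      cases htm with | ret h1 =>
      cases d3 with | inl d =>
      obtain ⟨v, hv, rfl, rfl⟩ := CGPure.reflection d rfl h1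
      exact ⟨_, _, .ret hmm hv, rfl, rfl⟩
    case toLabeled => exact ih3 (.inr ⟨rfl, .inl ⟨_, rfl⟩⟩) htm hh rfl
    case bind => exact ih3 (.inr ⟨rfl, .inr ⟨_, _, rfl⟩⟩) htm hh rfl
  | inl d ih =>
    intro S h e t he ht hh hH
    rcases he with he | ⟨he, ⟨e0, rfl⟩ | ⟨e1, e2, rfl⟩⟩ <;>
      simp only [Exp.thunkBody, Option.some.injEq, reduceCtorEq, Exp.inl.injEq] at he
    subst he
    cases ht with | toLabeled h1 =>
    obtain ⟨h', v, hf, rfl, rfl⟩ := ih (.inl rfl) h1 hh hH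
    exact ⟨_, _, .toLabeled .toLabeled hf, rfl, rfl⟩
  | caseL _ _ ih ih1 =>
    intro S h e t he ht hh hH
    rcases he with he | ⟨he, ⟨e0, rfl⟩ | ⟨e1, e2, rfl⟩⟩ <;>
      simp only [Exp.thunkBody, Option.some.injEq, reduceCtorEq, Exp.case.injEq] at he
    obtain ⟨rfl, rfl, rfl⟩ := he
    cases ht with | bind h1 h2 =>
    obtain ⟨h', v, hf, hv, rfl⟩ := ih (.inl rfl) h1 hh hH
    obtain rfl := Exp.inl.inj hv
    obtain ⟨S', hS', hh', hv', -⟩ := hf.preservation h1 hh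
    obtain ⟨h'', w, hf', rfl, rfl⟩ := ih1 (.inl (by simp only [Exp.subst, Exp.transl_subst]))
      ((h2.store_mono hS').subst_zero hv') hh' rfl
    exact ⟨_, _, .bind .bind hf hf', rfl, rfl⟩
  | caseR _ _ ih _ =>
    -- A translated computation always returns `inl`, so the error branch is unreachable.
    intro S h e t he ht hh hH
    rcases he with he | ⟨he, ⟨e0, rfl⟩ | ⟨e1, e2, rfl⟩⟩ <;>
      simp only [Exp.thunkBody, Option.some.injEq, reduceCtorEq, Exp.case.injEq] at he
    obtain ⟨rfl, rfl, rfl⟩ := he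
    cases ht with | bind h1 h2 =>
    obtain ⟨h', v, hf, hv, rfl⟩ := ih (.inl rfl) h1 hh hH
    simp at hv
  | _ =>
    intro S h e t he ht hh hH
    rcases he with he | ⟨he, ⟨e0, rfl⟩ | ⟨e1, e2, rfl⟩⟩ <;>
      simp [Exp.thunkBody] at he

/-- Canonical forms at boolean type. -/
theorem HasTy.transl_bool {S : List STy} {v : Exp} (h : HasTy S [] v .bool) (hv : CGVal v) :
    v.transl = v := by
  cases hv <;> cases h <;> rfl

/-! ## STATEMENT 8: Semantics preservation of the CG-to-FG translation at boolean type -/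

theorem cg2fg_semantics_preservation
    {L : Type} [Lattice L] [BoundedOrder L]
    (l1 l2 : L) (es et : Exp)
    (htr : CG2FG ([] : List (CGTy L)) es (CGTy.monad l1 l2 CGTy.bool) et) :
    (∀ (h : Heap) (v : Exp), CGForce [] es h v →
        ∃ h' : Heap, FGEval [] (Exp.app et Exp.unit) h' (Exp.inl v)) ∧
    (∀ (h' : Heap) (v' : Exp), FGEval [] (Exp.app et Exp.unit) h' v' →
        ∃ (h : Heap) (v : Exp), CGForce [] es h v ∧ v' = Exp.inl v) := by
  have hty := htr.hasTy
  obtain rfl := htr.eq_transl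
  have hnil : HeapTy [] [] := ⟨rfl, by simp⟩
  have key : ∀ (h : Heap) (v : Exp), CGForce [] es h v → v.transl = v := fun h v hf => by
    obtain ⟨S, -, -, hv, hval⟩ := hf.preservation hty hnil
    exact hv.transl_bool hval
  refine ⟨fun h v hf => ⟨h.map Exp.transl, ?_⟩, fun h' v' hF => ?_⟩
  · have h1 := hf.simulation
    rwa [key h v hf] at h1
  · obtain ⟨h, v, hf, rfl, -⟩ := CGForce.reflection hF (.inl rfl) hty hnil rfl
    exact ⟨h, v, hf, by rw [key h v hf]⟩
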